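/- For a small category C, identify each morphism of F_nC = F^{n+1}C with its underlying word of non-identity morphisms of C equipped with n+1 levels of parentheses, and let α : N_m(F_nC) → ⨿_{k∈ℕ} N_k(C) be the map defined on the m-nerve by deleting all parentheses, i.e., sending a string of m composable F_nC-morphisms to the concatenated underlying string of morphisms of C. If f : C → D is a functor sending non-identity morphisms to non-identity morphisms, then for all m, n the square with top row N_m(F_nC) → N_m(F_nD) (induced by f), bottom row ⨿_k N_k(C) → ⨿_k N_k(D) (induced by f), and vertical maps α, is a pull-back square of sets. -/

import Mathlib

set_option linter.unusedVariables false

noncomputable section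

open CategoryTheory

/-- The topological simplex associated to `x : SimplexCategory` (formerly in Mathlib). -/
def SimplexCategory.toTopObj (x : SimplexCategory) : Set (Fin (x.len + 1) → NNReal) :=
  { f : Fin (x.len + 1) → NNReal | ∑ i, f i = 1 }

/-- A morphism in `SimplexCategory` induces a map on the associated topological simplices
(formerly in Mathlib). -/
def SimplexCategory.toTopMap {x y : SimplexCategory} (f : x ⟶ y) (g : x.toTopObj) :
    y.toTopObj :=
  ⟨fun i => ∑ j ∈ Finset.univ.filter (fun j => f.toOrderHom j = i), g.1 j,
    (Finset.sum_fiberwise Finset.univ (fun j => f.toOrderHom j) g.1).trans g.2⟩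

namespace HC

variable {C : Type} {D : Type}

/-- Hom-sets of an explicitly given category structure. -/
abbrev Hm (T : SmallCategory C) (c d : C) : Type :=
  @Quiver.Hom C (T.toCategoryStruct.toQuiver) c d

/-- Identity of an explicitly given category structure. -/
abbrev idm (T : SmallCategory C) (c : C) : Hm T c c :=
  @CategoryStruct.id C T.toCategoryStruct c

/-- Composition of an explicitly given category structure (diagrammatic order). -/
abbrev cmp (T : SmallCategory C) {a b c : C} (f : Hm T a b) (g : Hm T b c) : Hm T a c :=
  @CategoryStruct.comp C T.toCategoryStruct a b c f g

/-- `f` "is an identity": there is an equality of objects `h : c = d` with `f = eqToHom h`. -/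
def IsIdLike (T : SmallCategory C) {c d : C} (f : Hm T c d) : Prop :=
  ∃ h : c = d, f = @eqToHom C T.toCategoryStruct c d h

/-- A non-identity morphism of `(C, T)`, i.e. a letter of the free category `FC`. -/
def Edge (T : SmallCategory C) (c d : C) : Type :=
  {f : Hm T c d // ¬ IsIdLike T f}

/-- A word of composable non-identity morphisms of `(C, T)`:
a morphism of the free category `FC`. -/
inductive PathE (T : SmallCategory C) : C → C → Type
  | nil (c : C) : PathE T c c
  | cons {a b c : C} (p : PathE T a b) (e : Edge T b c) : PathE T a c

/-- Concatenation of words. -/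
def PathE.comp {T : SmallCategory C} {a b : C} (p : PathE T a b) :
    ∀ {c : C}, PathE T b c → PathE T a c
  | _, .nil _ => p
  | _, .cons q e => .cons (p.comp q) e

@[simp] theorem PathE.comp_nil {T : SmallCategory C} {a b : C} (p : PathE T a b) :
    p.comp (PathE.nil b) = p := rfl

@[simp] theorem PathE.comp_cons {T : SmallCategory C} {a b c d : C} (p : PathE T a b)
    (q : PathE T b c) (e : Edge T c d) : p.comp (q.cons e) = (p.comp q).cons e := rfl

theorem PathE.nil_comp {T : SmallCategory C} :
    ∀ {a b : C} (p : PathE T a b), (PathE.nil a).comp p = p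
  | _, _, .nil _ => rfl
  | _, _, .cons q e => by rw [PathE.comp_cons, PathE.nil_comp q]

theorem PathE.comp_assoc {T : SmallCategory C} :
    ∀ {a b c d : C} (p : PathE T a b) (q : PathE T b c) (r : PathE T c d),
      (p.comp q).comp r = p.comp (q.comp r)
  | _, _, _, _, _, _, .nil _ => rfl
  | _, _, _, _, p, q, .cons r e => by
      simp only [PathE.comp_cons, PathE.comp_assoc p q r]

/-- The free category `FC` on `(C, T)`: same objects, morphisms are words of composable
non-identity morphisms, composition is concatenation, the empty word is the identity. -/
def freeCatStr (T : SmallCategory C) : SmallCategory C where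
  Hom := PathE T
  id := PathE.nil
  comp := fun p q => PathE.comp p q
  id_comp := fun p => PathE.nil_comp p
  comp_id := fun _ => rfl
  assoc := fun p q r => PathE.comp_assoc p q r


/-- Composing up a word into a morphism of the underlying category:
the effect of the counit `U : FC → C` on morphisms. -/
def composePath (T : SmallCategory C) : ∀ {a b : C}, PathE T a b → Hm T a b
  | _, _, .nil c => idm T c
  | _, _, .cons p e => cmp T (composePath T p) e.1

/-- The empty word, transported along an equality of objects. -/
def idPath (T : SmallCategory C) {c d : C} (h : c = d) : PathE T c d :=
  h ▸ PathE.nil c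

/-- The single-letter word on a (possibly identity) morphism: the operator `F`.
If `f` is an identity, the result is the empty word. -/
def Fop (T : SmallCategory C) {c d : C} (f : Hm T c d) : PathE T c d :=
  letI := Classical.dec (IsIdLike T f)
  if h : IsIdLike T f then idPath T h.choose
  else (PathE.nil c).cons ⟨f, h⟩

/-- The image of an edge under the free-category action of a "prefunctor"
`(Fo, Fh)`: the letter is kept if its image is not an identity, and dropped otherwise. -/
def edgeIm {S : SmallCategory C} {U : SmallCategory D} (Fo : C → D)
    (Fh : ∀ {c d : C}, Hm S c d → Hm U (Fo c) (Fo d))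
    {c d : C} (e : Edge S c d) : PathE U (Fo c) (Fo d) :=
  Fop U (Fh e.1)

/-- The action of the free-category functor `F` on a "prefunctor" `(Fo, Fh)`. -/
def pmapPath {S : SmallCategory C} {U : SmallCategory D} (Fo : C → D)
    (Fh : ∀ {c d : C}, Hm S c d → Hm U (Fo c) (Fo d)) :
    ∀ {c d : C}, PathE S c d → PathE U (Fo c) (Fo d)
  | _, _, .nil c => PathE.nil (Fo c)
  | _, _, .cons p e => (pmapPath Fo Fh p).comp (edgeIm Fo Fh e)

theorem single_not_idLike {T : SmallCategory C} {c d : C} (e : Edge T c d) :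
    ¬ IsIdLike (freeCatStr T) ((PathE.nil c).cons e) := by
  rintro ⟨h, hf⟩
  subst h
  have he : @eqToHom C (freeCatStr T).toCategoryStruct c c rfl = PathE.nil c := rfl
  rw [he] at hf
  have hf' : @Eq (PathE T c c) ((PathE.nil c).cons e) (PathE.nil c) := hf
  cases hf'

/-- The effect of the comultiplication `Δ : FC → F²C` on morphisms:
each letter `f` becomes the one-letter word `((f))`. -/
def comulH (T : SmallCategory C) : ∀ {a b : C}, PathE T a b → PathE (freeCatStr T) a b
  | _, _, .nil c => PathE.nil c
  | _, _, .cons p e =>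
      (comulH T p).cons ⟨(PathE.nil _).cons e, single_not_idLike e⟩

/-- The Dwyer–Kan resolution: `dkStr T n` is the category structure of
`F_n(C,T) = F^{n+1}(C,T)`. -/
def dkStr (T : SmallCategory C) : ℕ → SmallCategory C
  | 0 => freeCatStr T
  | n + 1 => freeCatStr (dkStr T n)

/-- Auxiliary: the face operator, recursing on `i` first. -/
def faceHAux (T : SmallCategory C) : ∀ (i n : ℕ) {c d : C},
    Hm (dkStr T (n + 1)) c d → Hm (dkStr T n) c d
  | 0, n => fun p => composePath (dkStr T n) p
  | _ + 1, 0 => fun p =>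
      pmapPath (S := dkStr T 0) (U := T) id (fun f => composePath T f) p
  | i + 1, n + 1 => fun p =>
      pmapPath (S := dkStr T (n + 1)) (U := dkStr T n) id (fun f => faceHAux T i n f) p

/-- The face functor `d_i = F^i(U_{F^{n+1-i}C}) : F_{n+1}C → F_nC` of the Dwyer–Kan
resolution, on morphisms.  (For `i > n+1` the value is irrelevant.) -/
def faceH (T : SmallCategory C) (n i : ℕ) {c d : C}
    (p : Hm (dkStr T (n + 1)) c d) : Hm (dkStr T n) c d :=
  faceHAux T i n p

/-- Auxiliary: the degeneracy operator, recursing on `i` first. -/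
def degHAux (T : SmallCategory C) : ∀ (i n : ℕ) {c d : C},
    Hm (dkStr T n) c d → Hm (dkStr T (n + 1)) c d
  | 0, 0 => fun p => comulH T p
  | 0, n + 1 => fun p => comulH (dkStr T n) p
  | _ + 1, 0 => fun p => comulH T p
  | i + 1, n + 1 => fun p =>
      pmapPath (S := dkStr T n) (U := dkStr T (n + 1)) id (fun f => degHAux T i n f) p

/-- The degeneracy functor `s_i = F^i(Δ_{F^{n-i}C}) : F_nC → F_{n+1}C` of the Dwyer–Kan
resolution, on morphisms.  (For `i > n` the value is irrelevant.) -/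
def degH (T : SmallCategory C) (n i : ℕ) {c d : C}
    (p : Hm (dkStr T n) c d) : Hm (dkStr T (n + 1)) c d :=
  degHAux T i n p

/-! ### Equation lemmas -/

@[simp] theorem composePath_nil {T : SmallCategory C} (c : C) :
    composePath T (PathE.nil c) = idm T c := by rw [composePath]

@[simp] theorem composePath_cons {T : SmallCategory C} {a b c : C}
    (p : PathE T a b) (e : Edge T b c) :
    composePath T (p.cons e) = cmp T (composePath T p) e.1 := by rw [composePath]

@[simp] theorem pmapPath_nil {S : SmallCategory C} {U : SmallCategory D} (Fo : C → D)
    (Fh : ∀ {c d : C}, Hm S c d → Hm U (Fo c) (Fo d)) (c : C) :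
    pmapPath Fo Fh (PathE.nil c) = PathE.nil (Fo c) := by rw [pmapPath]

@[simp] theorem pmapPath_cons {S : SmallCategory C} {U : SmallCategory D} (Fo : C → D)
    (Fh : ∀ {c d : C}, Hm S c d → Hm U (Fo c) (Fo d)) {a b c : C}
    (p : PathE S a b) (e : Edge S b c) :
    pmapPath Fo Fh (p.cons e) = (pmapPath Fo Fh p).comp (edgeIm Fo Fh e) := by rw [pmapPath]

@[simp] theorem comulH_nil {T : SmallCategory C} (c : C) :
    comulH T (PathE.nil c) = PathE.nil c := by rw [comulH]

@[simp] theorem comulH_cons {T : SmallCategory C} {a b c : C}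
    (p : PathE T a b) (e : Edge T b c) :
    comulH T (p.cons e) =
      (comulH T p).cons ⟨(PathE.nil _).cons e, single_not_idLike e⟩ := by rw [comulH]

/-! ### Functoriality of the structural operations -/

/-- `(Fo, Fh)` is a functor: it preserves identities and composition. -/
def IsFuncM {S : SmallCategory C} {U : SmallCategory D} (Fo : C → D)
    (Fh : ∀ {c d : C}, Hm S c d → Hm U (Fo c) (Fo d)) : Prop :=
  (∀ c : C, Fh (idm S c) = idm U (Fo c)) ∧
  (∀ {a b c : C} (f : Hm S a b) (g : Hm S b c), Fh (cmp S f g) = cmp U (Fh f) (Fh g))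

section Lemmas

variable {S : SmallCategory C} {U : SmallCategory D}
variable {Fo : C → D} {Fh : ∀ {c d : C}, Hm S c d → Hm U (Fo c) (Fo d)}

theorem eqToHom_eq_idm {T : SmallCategory C} (c : C) :
    @eqToHom C T.toCategoryStruct c c rfl = idm T c := rfl

theorem funcM_eqToHom (hF : IsFuncM Fo Fh) {c d : C} (h : c = d) :
    Fh (@eqToHom C S.toCategoryStruct c d h) = @eqToHom D U.toCategoryStruct (Fo c) (Fo d) (congrArg Fo h) := by
  subst h; exact hF.1 c

theorem pmapPath_comp {a b c : C} (p : PathE S a b) (q : PathE S b c) :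
    pmapPath Fo Fh (p.comp q) = (pmapPath Fo Fh p).comp (pmapPath Fo Fh q) := by
  induction q with
  | nil => simp
  | cons q e ih => simp [ih, PathE.comp_assoc]

theorem pmapPath_isFuncM :
    IsFuncM (S := freeCatStr S) (U := freeCatStr U) Fo
      (fun {_ _} p => pmapPath Fo Fh p) :=
  ⟨fun c => pmapPath_nil Fo Fh c, fun p q => pmapPath_comp p q⟩

theorem composePath_comp {T : SmallCategory C} {a b c : C}
    (p : PathE T a b) (q : PathE T b c) :
    composePath T (p.comp q) = cmp T (composePath T p) (composePath T q) := by
  induction q with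
  | nil => simp
  | cons q e ih => simp [ih]

theorem composePath_isFuncM {T : SmallCategory C} :
    IsFuncM (S := freeCatStr T) (U := T) id (fun {_ _} p => composePath T p) :=
  ⟨fun c => composePath_nil c, fun p q => composePath_comp p q⟩

theorem comulH_comp {T : SmallCategory C} {a b c : C}
    (p : PathE T a b) (q : PathE T b c) :
    comulH T (p.comp q) = (comulH T p).comp (comulH T q) := by
  induction q with
  | nil => simp
  | cons q e ih => simp [ih]; rfl

theorem comulH_isFuncM {T : SmallCategory C} :
    IsFuncM (S := freeCatStr T) (U := freeCatStr (freeCatStr T)) id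
      (fun {_ _} p => comulH T p) :=
  ⟨fun c => comulH_nil c, fun p q => comulH_comp p q⟩

theorem idPath_eq_eqToHom {T : SmallCategory C} {x y : C} (h : x = y) :
    idPath T h = @eqToHom C (freeCatStr T).toCategoryStruct x y h := by
  subst h; rfl

theorem idPath_isIdLike {T : SmallCategory C} {x y : C} (h : x = y) :
    IsIdLike (freeCatStr T) (idPath T h) :=
  ⟨h, idPath_eq_eqToHom h⟩

theorem composePath_idPath {T : SmallCategory C} {x y : C} (h : x = y) :
    composePath T (idPath T h) = @eqToHom C T.toCategoryStruct x y h := by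
  subst h; simp [idPath]

theorem composePath_edgeIm {c d : C} (e : Edge S c d) :
    composePath U (edgeIm Fo Fh e) = Fh e.1 := by
  unfold edgeIm Fop
  split
  · next h => exact (composePath_idPath h.choose).trans h.choose_spec.symm
  · next h =>
      exact (composePath_cons (PathE.nil _) ⟨_, h⟩).trans
        (by rw [composePath_nil]; exact @Category.id_comp D U _ _ _)

theorem pmapPath_idPath {x y : C} (h : x = y) :
    pmapPath Fo Fh (idPath S h) = idPath U (congrArg Fo h) := by
  subst h; simp [idPath]

theorem comulH_idPath {T : SmallCategory C} {x y : C} (h : x = y) :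
    comulH T (idPath T h) = idPath (freeCatStr T) h := by
  subst h; simp [idPath]

/-- Naturality of the counit. -/
theorem counit_nat (hF : IsFuncM Fo Fh) {a b : C} (p : PathE S a b) :
    composePath U (pmapPath Fo Fh p) = Fh (composePath S p) := by
  induction p with
  | nil => simp; exact (hF.1 _).symm
  | cons p e ih =>
      rw [pmapPath_cons, composePath_comp, ih, composePath_edgeIm, composePath_cons]
      exact (hF.2 _ _).symm

/-- `F` applied to the one-letter-word operator. -/
theorem pmap_Fop {D' : Type} {V : SmallCategory D'}
    {Go : D → D'} {Gh : ∀ {c d : D}, Hm U c d → Hm V (Go c) (Go d)}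
    (hG : IsFuncM Go Gh) {x y : D} (f : Hm U x y) :
    pmapPath Go Gh (Fop U f) = Fop V (Gh f) := by
  unfold Fop
  split
  · next h =>
      rw [pmapPath_idPath]
      have hf : Gh f = @eqToHom D' V.toCategoryStruct (Go x) (Go y) (congrArg Go h.choose) := by
        conv_lhs => rw [h.choose_spec]
        exact funcM_eqToHom hG h.choose
      rw [dif_pos ⟨congrArg Go h.choose, hf⟩]
  · next h =>
      refine (pmapPath_cons Go Gh (PathE.nil x) ⟨f, h⟩).trans ?_
      rw [pmapPath_nil, PathE.nil_comp]
      rfl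

theorem pmap_edgeIm {D' : Type} {V : SmallCategory D'}
    {Go : D → D'} {Gh : ∀ {c d : D}, Hm U c d → Hm V (Go c) (Go d)}
    (hG : IsFuncM Go Gh) {c d : C} (e : Edge S c d) :
    pmapPath Go Gh (edgeIm Fo Fh e) =
      edgeIm (fun c => Go (Fo c)) (fun {_ _} f => Gh (Fh f)) e :=
  pmap_Fop hG (Fh e.1)

/-- `F(G) ∘ F(H) = F(G ∘ H)` on morphisms. -/
theorem pmap_pmap {D' : Type} {V : SmallCategory D'}
    {Go : D → D'} {Gh : ∀ {c d : D}, Hm U c d → Hm V (Go c) (Go d)}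
    (hG : IsFuncM Go Gh) {a b : C} (p : PathE S a b) :
    pmapPath Go Gh (pmapPath Fo Fh p) =
      pmapPath (fun c => Go (Fo c)) (fun {_ _} f => Gh (Fh f)) p := by
  induction p with
  | nil => simp
  | cons p e ih =>
      rw [pmapPath_cons, pmapPath_comp, ih, pmapPath_cons, pmap_edgeIm hG]

/-- Specialization of `pmap_pmap` where the inner prefunctor is the identity on objects. -/
theorem pmap_pmap_id_inner {S' : SmallCategory C}
    {Fh' : ∀ {c d : C}, Hm S' c d → Hm S c d}
    (hF : IsFuncM Fo Fh) {a b : C} (p : PathE S' a b) :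
    pmapPath Fo Fh (pmapPath (S := S') (U := S) id (fun {_ _} f => Fh' f) p) =
      pmapPath (S := S') (U := U) Fo (fun {_ _} f => Fh (Fh' f)) p :=
  pmap_pmap hF p

/-- Specialization of `pmap_pmap` where the outer prefunctor is the identity on objects. -/
theorem pmap_pmap_id_outer {U' : SmallCategory D}
    {Gh : ∀ {c d : D}, Hm U c d → Hm U' c d}
    (hG : IsFuncM (S := U) (U := U') id (fun {_ _} f => Gh f)) {a b : C} (p : PathE S a b) :
    pmapPath (S := U) (U := U') id (fun {_ _} f => Gh f) (pmapPath Fo Fh p) =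
      pmapPath (S := S) (U := U') Fo (fun {_ _} f => Gh (Fh f)) p :=
  pmap_pmap hG p

theorem pmap_congr {Fh' : ∀ {c d : C}, Hm S c d → Hm U (Fo c) (Fo d)}
    (hc : ∀ {c d : C} (f : Hm S c d), Fh f = Fh' f) {a b : C} (p : PathE S a b) :
    pmapPath Fo Fh p = pmapPath Fo Fh' p := by
  induction p with
  | nil => simp
  | cons p e ih =>
      rw [pmapPath_cons, pmapPath_cons, ih]
      congr 1
      unfold edgeIm
      exact congrArg (Fop U) (hc e.1)

theorem comul_Fop {x y : D} (g : Hm U x y) :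
    comulH U (Fop U g) = Fop (freeCatStr U) (Fop U g) := by
  unfold Fop
  by_cases h : IsIdLike U g
  · rw [dif_pos h, comulH_idPath, dif_pos (idPath_isIdLike _)]
  · rw [dif_neg h, dif_neg (single_not_idLike (T := U) ⟨g, h⟩)]
    exact (comulH_cons (PathE.nil x) ⟨g, h⟩).trans (by rw [comulH_nil])

/-- Naturality of the comultiplication. -/
theorem comul_nat (hF : IsFuncM Fo Fh) {a b : C} (p : PathE S a b) :
    comulH U (pmapPath Fo Fh p) =
      pmapPath (S := freeCatStr S) (U := freeCatStr U) Fo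
        (fun {_ _} q => pmapPath Fo Fh q) (comulH S p) := by
  induction p with
  | nil =>
      simp
      exact (pmapPath_nil (S := freeCatStr S) (U := freeCatStr U) Fo
        (fun {_ _} q => pmapPath Fo Fh q) _).symm
  | cons p e ih =>
      rw [pmapPath_cons, comulH_comp, ih, comulH_cons]
      refine Eq.trans ?_ (pmapPath_cons (S := freeCatStr S) (U := freeCatStr U) Fo
        (fun {_ _} q => pmapPath Fo Fh q) (comulH S p) _).symm
      congr 1
      show comulH U (edgeIm Fo Fh e) =
        edgeIm (S := freeCatStr S) (U := freeCatStr U) Fo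
          (fun {_ _} q => pmapPath Fo Fh q) _
      unfold edgeIm
      have hs : pmapPath Fo Fh ((PathE.nil _).cons e) = Fop U (Fh e.1) := by
        rw [pmapPath_cons, pmapPath_nil, PathE.nil_comp]; rfl
      exact (comul_Fop (Fh e.1)).trans (congrArg (Fop (freeCatStr U)) hs.symm)

end Lemmas

/-! ### The Dwyer–Kan resolution of a functor, and naturality of faces and degeneracies -/

/-- The action `F_n(G) = F^{n+1}(G)` of the Dwyer–Kan resolution on a functor
(given by "prefunctor data" `(Fo, Fh)`), on morphisms. -/
def dkMapH {S : SmallCategory C} {U : SmallCategory D} (Fo : C → D)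
    (Fh : ∀ {c d : C}, Hm S c d → Hm U (Fo c) (Fo d)) :
    ∀ (n : ℕ) {c d : C}, Hm (dkStr S n) c d → Hm (dkStr U n) (Fo c) (Fo d)
  | 0 => fun p => pmapPath Fo Fh p
  | n + 1 => fun p =>
      pmapPath (S := dkStr S n) (U := dkStr U n) Fo (fun f => dkMapH Fo Fh n f) p

section Nat

variable {S : SmallCategory C} {U : SmallCategory D}
variable {Fo : C → D} {Fh : ∀ {c d : C}, Hm S c d → Hm U (Fo c) (Fo d)}

theorem dkMapH_isFuncM (n : ℕ) :
    IsFuncM (S := dkStr S n) (U := dkStr U n) Fo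
      (fun {_ _} f => dkMapH Fo Fh n f) := by
  match n with
  | 0 => exact pmapPath_isFuncM
  | n + 1 => exact pmapPath_isFuncM

theorem faceH_isFuncM (T : SmallCategory C) (n i : ℕ) :
    IsFuncM (S := dkStr T (n+1)) (U := dkStr T n) id
      (fun {_ _} f => faceH T n i f) := by
  unfold faceH
  match i, n with
  | 0, n => exact composePath_isFuncM (T := dkStr T n)
  | i + 1, 0 => exact pmapPath_isFuncM
  | i + 1, n + 1 => exact pmapPath_isFuncM

theorem degH_isFuncM (T : SmallCategory C) (n i : ℕ) :
    IsFuncM (S := dkStr T n) (U := dkStr T (n+1)) id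
      (fun {_ _} f => degH T n i f) := by
  unfold degH
  match i, n with
  | 0, 0 => exact comulH_isFuncM (T := T)
  | 0, n + 1 => exact comulH_isFuncM (T := dkStr T n)
  | i + 1, 0 => exact comulH_isFuncM (T := T)
  | i + 1, n + 1 => exact pmapPath_isFuncM

/-- Naturality of the face operators with respect to `F_•` applied to a functor. -/
theorem dkMapH_face (hF : IsFuncM Fo Fh) :
    ∀ (i n : ℕ) {c d : C} (w : Hm (dkStr S (n+1)) c d),
      dkMapH Fo Fh n (faceH S n i w) = faceH U n i (dkMapH Fo Fh (n+1) w)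
  | 0, n, c, d, w => (counit_nat (dkMapH_isFuncM n) w).symm
  | i + 1, 0, c, d, w => by
      show pmapPath Fo Fh (pmapPath (S := dkStr S 0) (U := S) id
          (fun {_ _} f => composePath S f) w)
        = pmapPath (S := dkStr U 0) (U := U) id (fun {_ _} f => composePath U f)
            (pmapPath (S := dkStr S 0) (U := dkStr U 0) Fo
              (fun {_ _} f => pmapPath Fo Fh f) w)
      refine (pmap_pmap_id_inner (S' := dkStr S 0) (Fh' := fun {_ _} f => composePath S f)
        hF w).trans (Eq.trans ?_ (pmap_pmap_id_outer (U := dkStr U 0) (U' := U)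
          (Gh := fun {_ _} f => composePath U f) (composePath_isFuncM (T := U)) w).symm)
      refine pmap_congr (fun {x y} f => ?_) w
      exact (counit_nat hF f).symm
  | i + 1, n + 1, c, d, w => by
      show pmapPath (S := dkStr S n) (U := dkStr U n) Fo
          (fun {_ _} f => dkMapH Fo Fh n f)
          (pmapPath (S := dkStr S (n+1)) (U := dkStr S n) id
            (fun {_ _} f => faceH S n i f) w)
        = pmapPath (S := dkStr U (n+1)) (U := dkStr U n) id
            (fun {_ _} f => faceH U n i f)
            (pmapPath (S := dkStr S (n+1)) (U := dkStr U (n+1)) Fo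
              (fun {_ _} f => dkMapH Fo Fh (n+1) f) w)
      rw [pmap_pmap_id_inner (dkMapH_isFuncM n) w, pmap_pmap_id_outer (faceH_isFuncM U n i) w]
      refine pmap_congr (fun {x y} f => ?_) w
      exact dkMapH_face hF i n f

/-- Naturality of the degeneracy operators with respect to `F_•` applied to a functor. -/
theorem dkMapH_deg (hF : IsFuncM Fo Fh) :
    ∀ (i n : ℕ) {c d : C} (w : Hm (dkStr S n) c d),
      dkMapH Fo Fh (n+1) (degH S n i w) = degH U n i (dkMapH Fo Fh n w)
  | 0, 0, c, d, w => (comul_nat hF w).symm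
  | 0, n + 1, c, d, w => (comul_nat (dkMapH_isFuncM n) w).symm
  | i + 1, 0, c, d, w => (comul_nat hF w).symm
  | i + 1, n + 1, c, d, w => by
      show pmapPath (S := dkStr S (n+1)) (U := dkStr U (n+1)) Fo
          (fun {_ _} f => dkMapH Fo Fh (n+1) f)
          (pmapPath (S := dkStr S n) (U := dkStr S (n+1)) id
            (fun {_ _} f => degH S n i f) w)
        = pmapPath (S := dkStr U n) (U := dkStr U (n+1)) id
            (fun {_ _} f => degH U n i f)
            (pmapPath (S := dkStr S n) (U := dkStr U n) Fo
              (fun {_ _} f => dkMapH Fo Fh n f) w)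
      rw [pmap_pmap_id_inner (dkMapH_isFuncM (n+1)) w, pmap_pmap_id_outer (degH_isFuncM U n i) w]
      refine pmap_congr (fun {x y} f => ?_) w
      exact dkMapH_deg hF i n f

end Nat

/-! ### The augmentation -/

/-- The counit–comultiplication identity `U ∘ Δ = id`. -/
theorem composePath_comulH {T : SmallCategory C} {a b : C} (p : PathE T a b) :
    composePath (freeCatStr T) (comulH T p) = p := by
  induction p with
  | nil => simp; rfl
  | cons p e ih =>
      rw [comulH_cons]
      exact (composePath_cons (comulH T p) _).trans
        (congrArg (fun q => PathE.comp q ((PathE.nil _).cons e)) ih)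

/-- The augmentation `ε : F_nC → C` on morphisms: composing everything up. -/
def epsH (T : SmallCategory C) : ∀ (n : ℕ) {c d : C}, Hm (dkStr T n) c d → Hm T c d
  | 0 => fun p => composePath T p
  | n + 1 => fun p => epsH T n (composePath (dkStr T n) p)

theorem epsH_isFuncM (T : SmallCategory C) (n : ℕ) :
    IsFuncM (S := dkStr T n) (U := T) id (fun {_ _} f => epsH T n f) := by
  induction n with
  | zero => exact composePath_isFuncM
  | succ n ih =>
      constructor
      · intro c
        show epsH T n (composePath (dkStr T n) (PathE.nil c)) = idm T c
        exact (congrArg (fun q => epsH T n q) (composePath_nil c)).trans (ih.1 c)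
      · intro a b c f g
        show epsH T n (composePath (dkStr T n) (PathE.comp f g)) = _
        exact (congrArg (fun q => epsH T n q) (composePath_comp f g)).trans (ih.2 _ _)

/-- The augmentation is compatible with the face operators. -/
theorem epsH_face (T : SmallCategory C) :
    ∀ (i n : ℕ) {c d : C} (w : Hm (dkStr T (n+1)) c d),
      epsH T n (faceH T n i w) = epsH T (n+1) w
  | 0, n, c, d, w => rfl
  | i + 1, 0, c, d, w => by
      show composePath T (pmapPath (S := dkStr T 0) (U := T) id
        (fun {_ _} f => composePath T f) w) = _
      exact counit_nat (S := dkStr T 0) (composePath_isFuncM (T := T)) w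
  | i + 1, n + 1, c, d, w => by
      show epsH T n (composePath (dkStr T n)
        (pmapPath (S := dkStr T (n+1)) (U := dkStr T n) id
          (fun {_ _} f => faceH T n i f) w)) = _
      rw [counit_nat (faceH_isFuncM T n i) w, epsH_face T i n]
      rfl

/-- The augmentation is compatible with the degeneracy operators. -/
theorem epsH_deg (T : SmallCategory C) :
    ∀ (i n : ℕ) {c d : C} (w : Hm (dkStr T n) c d),
      epsH T (n+1) (degH T n i w) = epsH T n w
  | 0, 0, c, d, w => by
      show composePath T (composePath (freeCatStr T) (comulH T w)) = _
      exact congrArg (fun q => composePath T q) (composePath_comulH w)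
  | 0, n + 1, c, d, w => by
      show epsH T (n+1) (composePath (freeCatStr (dkStr T n)) (comulH (dkStr T n) w)) = _
      exact congrArg (fun q => epsH T (n+1) q) (composePath_comulH w)
  | i + 1, 0, c, d, w => by
      show composePath T (composePath (freeCatStr T) (comulH T w)) = _
      exact congrArg (fun q => composePath T q) (composePath_comulH w)
  | i + 1, n + 1, c, d, w => by
      show epsH T (n+1) (composePath (dkStr T (n+1))
        (pmapPath (S := dkStr T n) (U := dkStr T (n+1)) id
          (fun {_ _} f => degH T n i f) w)) = _
      rw [counit_nat (degH_isFuncM T n i) w, epsH_deg T i n]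
      rfl


section MoreNat

variable {S : SmallCategory C} {U : SmallCategory D}
variable {Fo : C → D} {Fh : ∀ {c d : C}, Hm S c d → Hm U (Fo c) (Fo d)}

theorem dkMapH_comp {D' : Type} {V : SmallCategory D'}
    {Go : D → D'} {Gh : ∀ {c d : D}, Hm U c d → Hm V (Go c) (Go d)}
    (hG : IsFuncM Go Gh) :
    ∀ (n : ℕ) {c d : C} (w : Hm (dkStr S n) c d),
      dkMapH Go Gh n (dkMapH Fo Fh n w) =
        dkMapH (fun c => Go (Fo c)) (fun {_ _} f => Gh (Fh f)) n w
  | 0, c, d, w => pmap_pmap hG w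
  | n + 1, c, d, w => by
      show pmapPath (S := dkStr U n) (U := dkStr V n) Go
          (fun {_ _} f => dkMapH Go Gh n f)
          (pmapPath (S := dkStr S n) (U := dkStr U n) Fo
            (fun {_ _} f => dkMapH Fo Fh n f) w) = _
      rw [pmap_pmap (dkMapH_isFuncM (Fo := Go) (Fh := Gh) n) w]
      refine pmap_congr (fun {x y} f => ?_) w
      exact dkMapH_comp hG n f

theorem dkMapH_congr {Fh' : ∀ {c d : C}, Hm S c d → Hm U (Fo c) (Fo d)}
    (hc : ∀ {c d : C} (f : Hm S c d), Fh f = Fh' f) :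
    ∀ (n : ℕ) {c d : C} (w : Hm (dkStr S n) c d),
      dkMapH Fo Fh n w = dkMapH Fo Fh' n w
  | 0, c, d, w => pmap_congr hc w
  | n + 1, c, d, w => by
      show pmapPath (S := dkStr S n) (U := dkStr U n) Fo
          (fun {_ _} f => dkMapH Fo Fh n f) w = _
      refine pmap_congr (fun {x y} f => ?_) w
      exact dkMapH_congr hc n f

end MoreNat

/-! ### The simplicial enrichment of `Top` and homotopy coherent diagrams -/

/-- The geometric `n`-simplex. -/
abbrev TopSimplex (n : ℕ) : Type :=
  ↥(SimplexCategory.toTopObj (SimplexCategory.mk n))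

/-- A homotopy coherent diagram of shape `(C, T)` in `Top`: a simplicial functor from the
Dwyer–Kan resolution `F_•(C,T)` to `Top` (with its simplicial enrichment
`map(X,Y)_n = Top(X × |Δⁿ|, Y)`): it assigns a space `obj c` to each object and a continuous
map `obj c × |Δⁿ| → obj d` to each morphism of `F_n(C,T)`, compatibly with identities,
composition, faces and degeneracies. -/
structure HCDiagram (C : Type) (T : SmallCategory C) : Type 1 where
  obj : C → TopCat.{0}
  hom : ∀ (n : ℕ) {c d : C}, Hm (dkStr T n) c d → C(↑(obj c) × TopSimplex n, ↑(obj d))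
  hom_id : ∀ (c : C) (x : ↑(obj c)) (t : TopSimplex 0),
    hom 0 (idm (dkStr T 0) c) (x, t) = x
  hom_comp : ∀ (n : ℕ) {c d e : C} (f : Hm (dkStr T n) c d) (g : Hm (dkStr T n) d e)
    (x : ↑(obj c)) (t : TopSimplex n),
    hom n (cmp (dkStr T n) f g) (x, t) = hom n g (hom n f (x, t), t)
  hom_face : ∀ (n : ℕ) (i : Fin (n + 2)) {c d : C} (w : Hm (dkStr T (n + 1)) c d)
    (x : ↑(obj c)) (t : TopSimplex n),
    hom n (faceH T n i.1 w) (x, t) =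
      hom (n + 1) w (x, SimplexCategory.toTopMap (SimplexCategory.δ i) t)
  hom_deg : ∀ (n : ℕ) (i : Fin (n + 1)) {c d : C} (w : Hm (dkStr T n) c d)
    (x : ↑(obj c)) (t : TopSimplex (n + 1)),
    hom (n + 1) (degH T n i.1 w) (x, t) =
      hom n w (x, SimplexCategory.toTopMap (SimplexCategory.σ i) t)

/-- Restriction of a homotopy coherent diagram along a functor, given by prefunctor data
`(Fo, Fh)` satisfying the functor laws. -/
def restrictHC {S : SmallCategory C} {T : SmallCategory D}
    (Fo : C → D) (Fh : ∀ {c d : C}, Hm S c d → Hm T (Fo c) (Fo d)) (hF : IsFuncM Fo Fh)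
    (F : HCDiagram D T) : HCDiagram C S where
  obj c := F.obj (Fo c)
  hom := fun n {c d} w => F.hom n (dkMapH Fo Fh n w)
  hom_id c x t := by
    have h : dkMapH Fo Fh 0 (idm (dkStr S 0) c) = idm (dkStr T 0) (Fo c) :=
      (dkMapH_isFuncM (Fo := Fo) (Fh := Fh) 0).1 c
    show F.hom 0 (dkMapH Fo Fh 0 (idm (dkStr S 0) c)) (x, t) = x
    rw [h]
    exact F.hom_id (Fo c) x t
  hom_comp := fun n {c d e} f g x t => by
    have h : dkMapH Fo Fh n (cmp (dkStr S n) f g) =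
        cmp (dkStr T n) (dkMapH Fo Fh n f) (dkMapH Fo Fh n g) :=
      (dkMapH_isFuncM (Fo := Fo) (Fh := Fh) n).2 f g
    show F.hom n (dkMapH Fo Fh n (cmp (dkStr S n) f g)) (x, t) = _
    rw [h]
    exact F.hom_comp n _ _ x t
  hom_face := fun n i {c d} w x t => by
    have h : dkMapH Fo Fh n (faceH S n i.1 w) = faceH T n i.1 (dkMapH Fo Fh (n+1) w) :=
      dkMapH_face hF i.1 n w
    show F.hom n (dkMapH Fo Fh n (faceH S n i.1 w)) (x, t) = _
    rw [h]
    exact F.hom_face n i _ x t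
  hom_deg := fun n i {c d} w x t => by
    have h : dkMapH Fo Fh (n+1) (degH S n i.1 w) = degH T n i.1 (dkMapH Fo Fh n w) :=
      dkMapH_deg hF i.1 n w
    show F.hom (n+1) (dkMapH Fo Fh (n+1) (degH S n i.1 w)) (x, t) = _
    rw [h]
    exact F.hom_deg n i _ x t

/-! ### The cone and homotopy colimits -/

/-- The cone `Ĉ`: the category `C` with one new terminal object `none` adjoined. -/
def coneStr (T : SmallCategory C) : SmallCategory (Option C) where
  Hom x y :=
    match y, x with
    | none, _ => PUnit
    | some d, some c => Hm T c d
    | some _, none => PEmpty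
  id x :=
    match x with
    | some c => idm T c
    | none => PUnit.unit
  comp {x y z} f g :=
    match z, y, x, f, g with
    | none, _, _, _, _ => PUnit.unit
    | some _, some _, some _, f, g => cmp T f g
    | some _, none, _, _, g => PEmpty.elim g
    | some _, some _, none, f, _ => PEmpty.elim f
  id_comp {x y} f := by
    cases x <;> cases y
    · rfl
    · exact PEmpty.elim f
    · cases f; rfl
    · show cmp T (idm T _) f = f
      exact @Category.id_comp C T _ _ f
  comp_id {x y} f := by
    cases x <;> cases y
    · cases f; rfl
    · exact PEmpty.elim f
    · cases f; rfl
    · show cmp T f (idm T _) = f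
      exact @Category.comp_id C T _ _ f
  assoc {w x y z} f g h := by
    cases w <;> cases x <;> cases y <;> cases z <;>
      first
        | rfl
        | exact PEmpty.elim f
        | exact PEmpty.elim g
        | exact PEmpty.elim h
        | exact @Category.assoc C T _ _ _ _ f g h

/-- The inclusion of `C` into its cone, on morphisms. -/
def inclHm (T : SmallCategory C) {c d : C} (f : Hm T c d) :
    Hm (coneStr T) (some c) (some d) := f

theorem inclHm_isFuncM (T : SmallCategory C) :
    IsFuncM (S := T) (U := coneStr T) some (fun {_ _} f => inclHm T f) :=
  ⟨fun _ => rfl, fun _ _ => rfl⟩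

/-- The induced inclusion `F_n C → F_n Ĉ` of Dwyer–Kan resolutions, on morphisms. -/
def coneIncl (T : SmallCategory C) (n : ℕ) {c d : C} (f : Hm (dkStr T n) c d) :
    Hm (dkStr (coneStr T) n) (some c) (some d) :=
  dkMapH (S := T) (U := coneStr T) some (fun {_ _} g => inclHm T g) n f

/-- An extension of a homotopy coherent diagram `F` of shape `C` over the cone `Ĉ`,
with value `pt` at the cone point; equivalently, a simplicial natural transformation
`φ_•(c) = F_•Ĉ(c, *) → map(F(c), pt)`. -/
structure ConeExt {T : SmallCategory C} (F : HCDiagram C T) : Type 1 where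
  pt : TopCat.{0}
  hom : ∀ (n : ℕ) (c : C), Hm (dkStr (coneStr T) n) (some c) none →
    C(↑(F.obj c) × TopSimplex n, ↑pt)
  hom_nat : ∀ (n : ℕ) {c d : C} (f : Hm (dkStr T n) c d)
    (w : Hm (dkStr (coneStr T) n) (some d) none) (x : ↑(F.obj c)) (t : TopSimplex n),
    hom n c (cmp (dkStr (coneStr T) n) (coneIncl T n f) w) (x, t) =
      hom n d w (F.hom n f (x, t), t)
  hom_face : ∀ (n : ℕ) (i : Fin (n + 2)) (c : C)
    (w : Hm (dkStr (coneStr T) (n + 1)) (some c) none)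
    (x : ↑(F.obj c)) (t : TopSimplex n),
    hom n c (faceH (coneStr T) n i.1 w) (x, t) =
      hom (n + 1) c w (x, SimplexCategory.toTopMap (SimplexCategory.δ i) t)
  hom_deg : ∀ (n : ℕ) (i : Fin (n + 1)) (c : C)
    (w : Hm (dkStr (coneStr T) n) (some c) none)
    (x : ↑(F.obj c)) (t : TopSimplex (n + 1)),
    hom (n + 1) c (degH (coneStr T) n i.1 w) (x, t) =
      hom n c w (x, SimplexCategory.toTopMap (SimplexCategory.σ i) t)

/-- `E` is a homotopy colimit (an initial extension over the cone) of `F`: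
for every extension `E'` there is a unique continuous map `φ : E.pt → E'.pt`
carrying `E` to `E'` by postcomposition.  `cyl(F) := E.pt`. -/
def IsCyl {T : SmallCategory C} (F : HCDiagram C T) (E : ConeExt F) : Prop :=
  ∀ E' : ConeExt F, ∃! φ : C(↑E.pt, ↑E'.pt),
    ∀ (n : ℕ) (c : C) (w : Hm (dkStr (coneStr T) n) (some c) none)
      (x : ↑(F.obj c)) (t : TopSimplex n),
      E'.hom n c w (x, t) = φ (E.hom n c w (x, t))


/-! ### Restriction of cone extensions along a functor -/

/-- A functor `C → D` extends to the cones, on objects. -/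
def coneO (Go : C → D) : Option C → Option D
  | some c => some (Go c)
  | none => none

/-- A functor `C → D` extends to the cones, on morphisms. -/
def coneHm {S : SmallCategory C} {U : SmallCategory D} (Go : C → D)
    (Gh : ∀ {c d : C}, Hm S c d → Hm U (Go c) (Go d)) :
    ∀ {x y : Option C}, Hm (coneStr S) x y → Hm (coneStr U) (coneO Go x) (coneO Go y)
  | some _, some _ => fun f => Gh f
  | some _, none => fun _ => PUnit.unit
  | none, none => fun _ => PUnit.unit
  | none, some _ => fun f => PEmpty.elim f

theorem coneHm_isFuncM {S : SmallCategory C} {U : SmallCategory D} {Go : C → D}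
    {Gh : ∀ {c d : C}, Hm S c d → Hm U (Go c) (Go d)} (hG : IsFuncM Go Gh) :
    IsFuncM (coneO Go) (fun {_ _} f => coneHm Go Gh f) := by
  constructor
  · intro x
    cases x
    · rfl
    · exact hG.1 _
  · intro a b c f g
    cases a <;> cases b <;> cases c <;>
      first
        | rfl
        | exact PEmpty.elim f
        | exact PEmpty.elim g
        | exact hG.2 f g

theorem dkMapH_coneIncl {S : SmallCategory C} {U : SmallCategory D} {Go : C → D}
    {Gh : ∀ {c d : C}, Hm S c d → Hm U (Go c) (Go d)} (hG : IsFuncM Go Gh)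
    (n : ℕ) {c d : C} (f : Hm (dkStr S n) c d) :
    dkMapH (coneO Go) (fun {_ _} g => coneHm Go Gh g) n (coneIncl S n f) =
      coneIncl U n (dkMapH Go Gh n f) := by
  have a := dkMapH_comp (Fo := some) (Fh := fun {_ _} g => inclHm S g)
    (Go := coneO Go) (Gh := fun {_ _} g => coneHm Go Gh g) (coneHm_isFuncM hG) n f
  have b := dkMapH_comp (Fo := Go) (Fh := fun {_ _} g => Gh g)
    (Go := some) (Gh := fun {_ _} g => inclHm U g) (inclHm_isFuncM U) n f
  exact a.trans ((dkMapH_congr (fun {_ _} g => rfl) n f).trans b.symm)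

/-- Restriction of a cone extension along a functor:  the restriction of the underlying
diagram inherits an extension with the same value at the cone point. -/
def restrictExt {S : SmallCategory C} {T : SmallCategory D}
    (Go : C → D) (Gh : ∀ {c d : C}, Hm S c d → Hm T (Go c) (Go d)) (hG : IsFuncM Go Gh)
    (F : HCDiagram D T) (E : ConeExt F) : ConeExt (restrictHC Go Gh hG F) where
  pt := E.pt
  hom n c w := E.hom n (Go c)
    (dkMapH (coneO Go) (fun {_ _} g => coneHm Go Gh g) n w)
  hom_nat := fun n {c d} f w x t => by
    have h1 : dkMapH (coneO Go) (fun {_ _} g => coneHm Go Gh g) n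
        (cmp (dkStr (coneStr S) n) (coneIncl S n f) w) =
        cmp (dkStr (coneStr T) n)
          (dkMapH (coneO Go) (fun {_ _} g => coneHm Go Gh g) n (coneIncl S n f))
          (dkMapH (coneO Go) (fun {_ _} g => coneHm Go Gh g) n w) :=
      (dkMapH_isFuncM n).2 _ _
    show E.hom n (Go c) (dkMapH (coneO Go) (fun {_ _} g => coneHm Go Gh g) n
      (cmp (dkStr (coneStr S) n) (coneIncl S n f) w)) (x, t) = _
    rw [h1, dkMapH_coneIncl hG n f]
    exact E.hom_nat n (dkMapH Go Gh n f) _ x t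
  hom_face := fun n i c w x t => by
    have h : dkMapH (coneO Go) (fun {_ _} g => coneHm Go Gh g) n
        (faceH (coneStr S) n i.1 w) =
        faceH (coneStr T) n i.1
          (dkMapH (coneO Go) (fun {_ _} g => coneHm Go Gh g) (n+1) w) :=
      dkMapH_face (coneHm_isFuncM hG) i.1 n w
    show E.hom n (Go c) (dkMapH (coneO Go) (fun {_ _} g => coneHm Go Gh g) n
      (faceH (coneStr S) n i.1 w)) (x, t) = _
    rw [h]
    exact E.hom_face n i (Go c) _ x t
  hom_deg := fun n i c w x t => by
    have h : dkMapH (coneO Go) (fun {_ _} g => coneHm Go Gh g) (n+1)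
        (degH (coneStr S) n i.1 w) =
        degH (coneStr T) n i.1
          (dkMapH (coneO Go) (fun {_ _} g => coneHm Go Gh g) n w) :=
      dkMapH_deg (coneHm_isFuncM hG) i.1 n w
    show E.hom (n+1) (Go c) (dkMapH (coneO Go) (fun {_ _} g => coneHm Go Gh g) (n+1)
      (degH (coneStr S) n i.1 w)) (x, t) = _
    rw [h]
    exact E.hom_deg n i (Go c) _ x t

/-- The image of a cone morphism `some c ⟶ none` under `F_•` of the cone extension of a
functor `(Go, Gh)`. -/
def coneMapToPt {S : SmallCategory C} {T : SmallCategory D}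
    (Go : C → D) (Gh : ∀ {c d : C}, Hm S c d → Hm T (Go c) (Go d)) (n : ℕ) (c : C)
    (w : Hm (dkStr (coneStr S) n) (some c) none) :
    Hm (dkStr (coneStr T) n) (some (Go c)) none :=
  dkMapH (coneO Go) (fun {_ _} g => coneHm Go Gh g) n w

/-! ### Strict diagrams as homotopy coherent diagrams -/

/-- A strict diagram, i.e. a functor `(C,T) → Top`, regarded as a homotopy coherent diagram
by precomposition with the augmentation `ε : F_•C → C`. -/
def strictToHC (T : SmallCategory C) (F : @CategoryTheory.Functor C T TopCat.{0} _) :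
    HCDiagram C T where
  obj := F.obj
  hom n {c d} w := (F.map (epsH T n w)).hom.comp (ContinuousMap.fst)
  hom_id c x t := by
    have h : epsH T 0 (idm (dkStr T 0) c) = idm T c := (epsH_isFuncM T 0).1 c
    show (F.map (epsH T 0 (idm (dkStr T 0) c))) x = x
    rw [h]
    rw [@CategoryTheory.Functor.map_id C T TopCat _ F c]
    rfl
  hom_comp := fun n {c d e} f g x t => by
    have h : epsH T n (cmp (dkStr T n) f g) = cmp T (epsH T n f) (epsH T n g) :=
      (epsH_isFuncM T n).2 f g
    show (F.map (epsH T n (cmp (dkStr T n) f g))) x = _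
    rw [h, @CategoryTheory.Functor.map_comp C T TopCat _ F _ _ _ _ _]
    rfl
  hom_face := fun n i {c d} w x t => by
    have h : epsH T n (faceH T n i.1 w) = epsH T (n+1) w := epsH_face T i.1 n w
    show (F.map (epsH T n (faceH T n i.1 w))) x = _
    rw [h]
    rfl
  hom_deg := fun n i {c d} w x t => by
    have h : epsH T (n+1) (degH T n i.1 w) = epsH T n w := epsH_deg T i.1 n w
    show (F.map (epsH T (n+1) (degH T n i.1 w))) x = _
    rw [h]
    rfl

/-! ### Composable strings and nerves -/

/-- A composable string of morphisms of `(C, T)` (identities allowed): an element of the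
nerve of `C` of length `length`. -/
inductive CStr (T : SmallCategory C) : C → C → Type
  | nil (c : C) : CStr T c c
  | cons {a b c : C} (p : CStr T a b) (f : Hm T b c) : CStr T a c

/-- The length of a composable string. -/
def CStr.length {T : SmallCategory C} : ∀ {a b : C}, CStr T a b → ℕ
  | _, _, .nil _ => 0
  | _, _, .cons p _ => p.length + 1

/-- The action of a functor (given as prefunctor data) on composable strings, i.e. on the
nerve. -/
def mapCStr {S : SmallCategory C} {U : SmallCategory D} (Fo : C → D)
    (Fh : ∀ {c d : C}, Hm S c d → Hm U (Fo c) (Fo d)) :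
    ∀ {a b : C}, CStr S a b → CStr U (Fo a) (Fo b)
  | _, _, .nil c => .nil (Fo c)
  | _, _, .cons p f => .cons (mapCStr Fo Fh p) (Fh f)

theorem length_mapCStr {S : SmallCategory C} {U : SmallCategory D} (Fo : C → D)
    (Fh : ∀ {c d : C}, Hm S c d → Hm U (Fo c) (Fo d)) :
    ∀ {a b : C} (p : CStr S a b), (mapCStr Fo Fh p).length = p.length
  | _, _, .nil _ => by simp [mapCStr, CStr.length]
  | _, _, .cons p f => by
      simp [mapCStr, CStr.length, length_mapCStr Fo Fh p]

/-- The disjoint union `⨿_k N_k(C)` of all the nerve levels of `(C, T)`: the set of all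
composable strings. -/
def TotalNerve (T : SmallCategory C) : Type := Σ cd : C × C, CStr T cd.1 cd.2

/-- The set `N_k(C)` of `k`-simplices of the nerve of `(C, T)`. -/
def NerveLevel (T : SmallCategory C) (k : ℕ) : Type :=
  {z : TotalNerve T // z.2.length = k}

/-- The map induced on (total) nerves by a functor. -/
def mapTotalNerve {S : SmallCategory C} {U : SmallCategory D} (Fo : C → D)
    (Fh : ∀ {c d : C}, Hm S c d → Hm U (Fo c) (Fo d)) :
    TotalNerve S → TotalNerve U :=
  fun z => ⟨(Fo z.1.1, Fo z.1.2), mapCStr Fo Fh z.2⟩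

/-- The map induced on `k`-simplices of nerves by a functor. -/
def mapNerveLevel {S : SmallCategory C} {U : SmallCategory D} (Fo : C → D)
    (Fh : ∀ {c d : C}, Hm S c d → Hm U (Fo c) (Fo d)) (k : ℕ) :
    NerveLevel S k → NerveLevel U k :=
  fun z => ⟨mapTotalNerve Fo Fh z.1, by
    obtain ⟨⟨cd, p⟩, hp⟩ := z
    exact (length_mapCStr Fo Fh p).trans hp⟩

/-- A pushout square of types (sets), via the universal property. -/
def IsPushoutTypes {A B₁ B₂ X : Type}
    (f₁ : A → B₁) (f₂ : A → B₂) (g₁ : B₁ → X) (g₂ : B₂ → X) : Prop :=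
  (∀ a, g₁ (f₁ a) = g₂ (f₂ a)) ∧
  ∀ (Z : Type) (u : B₁ → Z) (v : B₂ → Z), (∀ a, u (f₁ a) = v (f₂ a)) →
    ∃! w : X → Z, (∀ b, w (g₁ b) = u b) ∧ (∀ b, w (g₂ b) = v b)

/-! ### Miscellaneous topology -/

/-- A continuous map is a homotopy equivalence. -/
def IsHomotopyEquivMap {X Y : Type} [TopologicalSpace X] [TopologicalSpace Y]
    (f : C(X, Y)) : Prop :=
  ∃ g : C(Y, X), (g.comp f).Homotopic (ContinuousMap.id X) ∧
    (f.comp g).Homotopic (ContinuousMap.id Y)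

end HC

open HC

namespace HC

variable {C D : Type}

/-- Concatenation of composable strings. -/
def CStr.append {T : SmallCategory C} {a b : C} (p : CStr T a b) :
    ∀ {c : C}, CStr T b c → CStr T a c
  | _, .nil _ => p
  | _, .cons q f => .cons (p.append q) f

/-- The underlying word of a morphism of `FC` (a word of non-identity morphisms),
as a composable string in `C`. -/
def flattenPath {T : SmallCategory C} : ∀ {a b : C}, PathE T a b → CStr T a b
  | _, _, .nil c => .nil c
  | _, _, .cons p e => .cons (flattenPath p) e.1

/-- Flattening a word of strings into a single string. -/
def flattenPE {S : SmallCategory C} {T : SmallCategory C}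
    (g : ∀ {a b : C}, Hm S a b → CStr T a b) :
    ∀ {a b : C}, PathE S a b → CStr T a b
  | _, _, .nil c => .nil c
  | _, _, .cons p e => (flattenPE g p).append (g e.1)

/-- Deleting all parentheses: the underlying composable string of `C`-morphisms of a
morphism of `F_nC`. -/
def flattenDK (T : SmallCategory C) : ∀ (n : ℕ) {a b : C}, Hm (dkStr T n) a b → CStr T a b
  | 0, _, _, p => flattenPath p
  | n + 1, _, _, p => flattenPE (fun {_ _} f => flattenDK T n f) p

/-- The map `α : N_m(F_nC) → ⨿_k N_k(C)` deleting all parentheses: a string of `m`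
composable `F_nC`-morphisms is sent to the concatenation of the underlying strings of
morphisms of `C`. -/
def alphaStr (T : SmallCategory C) (n : ℕ) :
    ∀ {a b : C}, CStr (dkStr T n) a b → CStr T a b
  | _, _, .nil c => .nil c
  | _, _, .cons p f => (alphaStr T n p).append (flattenDK T n f)

/-- The map `α` on the `m`-nerve of `F_nC`, with values in the total nerve `⨿_k N_k(C)`. -/
def alphaNerve (T : SmallCategory C) (n m : ℕ) :
    NerveLevel (dkStr T n) m → TotalNerve T :=
  fun z => ⟨z.1.1, alphaStr T n z.1.2⟩

end HC

namespace HC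

section Pullback

variable {C D : Type}

/-- Concatenating a string of morphisms, each flattened by `g`. -/
def catCS {S : SmallCategory C} {T : SmallCategory C}
    (g : ∀ {a b : C}, Hm S a b → CStr T a b) :
    ∀ {a b : C}, CStr S a b → CStr T a b
  | _, _, .nil c => .nil c
  | _, _, .cons p e => (catCS g p).append (g e)

theorem alphaStr_eq (T : SmallCategory C) (n : ℕ) {a b : C} (p : CStr (dkStr T n) a b) :
    alphaStr T n p = catCS (fun {_ _} f => flattenDK T n f) p := by
  induction p with
  | nil => simp only [alphaStr, catCS]
  | cons p e ih => simp only [alphaStr, catCS, ih]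

theorem flattenPE_eq {S T : SmallCategory C} (g : ∀ {a b : C}, Hm S a b → CStr T a b)
    {a b : C} (p : PathE S a b) :
    flattenPE g p = catCS g (flattenPath p) := by
  induction p with
  | nil => simp only [flattenPE, catCS, flattenPath]
  | cons p e ih => simp only [flattenPE, catCS, flattenPath, ih]

/-- One-letter strings. -/
def single (T : SmallCategory C) {a b : C} (f : Hm T a b) : CStr T a b :=
  (CStr.nil a).cons f

theorem flattenPath_eq {T : SmallCategory C} {a b : C} (p : PathE T a b) :
    flattenPath p = flattenPE (fun {_ _} f => single T f) p := by
  induction p with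
  | nil => simp only [flattenPE, flattenPath]
  | cons p e ih => simp only [flattenPE, flattenPath, ih, single, CStr.append]

theorem flattenPath_cons {T : SmallCategory C} {a b c : C} (p : PathE T a b) (e : Edge T b c) :
    flattenPath (p.cons e) = (flattenPath p).cons e.1 := by
  simp only [flattenPath]

theorem flattenDK_zero (T : SmallCategory C) {a b : C} (p : PathE T a b) :
    flattenDK T 0 p = flattenPath p := by
  first
  | rfl
  | exact flattenDK.eq_1 T _ _ p

theorem flattenDK_succ (T : SmallCategory C) (n : ℕ) {a b : C} (p : PathE (dkStr T n) a b) :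
    flattenDK T (n + 1) p = flattenPE (fun {_ _} f => flattenDK T n f) p := by
  first
  | rfl
  | exact flattenDK.eq_2 T _ _ n p

theorem flattenPath_inj {T : SmallCategory C} {a b : C} (p q : PathE T a b)
    (h : flattenPath p = flattenPath q) : p = q := by
  induction p with
  | nil => 
    cases q with
    | nil => rfl
    | cons q e => simp only [flattenPath] at h; cases h
  | cons p e ih =>
    cases q with
    | nil => simp only [flattenPath] at h; cases h
    | cons q e' =>
      simp only [flattenPath] at h
      injection h with h3 h4 h5 h6
      subst h3
      rw [ih q (eq_of_heq h5), Subtype.ext (eq_of_heq h6)]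

theorem cons_not_idLike {T : SmallCategory C} {a b c : C} (p : PathE T a b) (e : Edge T b c) :
    ¬ IsIdLike (freeCatStr T) (p.cons e) := by
  rintro ⟨h, hf⟩
  subst h
  have hf' : @Eq (PathE T a a) (p.cons e) (PathE.nil a) := hf
  cases hf'

theorem length_append {T : SmallCategory C} {a b c : C} (p : CStr T a b) (q : CStr T b c) :
    (p.append q).length = p.length + q.length := by
  induction q with
  | nil => simp [CStr.append, CStr.length]
  | cons q e ih => simp only [CStr.append, CStr.length, ih]; omega

theorem length_heq {T : SmallCategory C} {a b a' b' : C} (ha : a = a') (hb : b = b')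
    (p : CStr T a b) (q : CStr T a' b') (h : HEq p q) : p.length = q.length := by
  subst ha hb; rw [eq_of_heq h]

theorem append_cancel {T : SmallCategory C} {a b c c' : C}
    (p : CStr T a c) (q : CStr T c b) (p' : CStr T a c') (q' : CStr T c' b)
    (hl : q.length = q'.length) (h : p.append q = p'.append q') :
    c = c' ∧ HEq p p' ∧ HEq q q' := by
  induction q with
  | nil =>
    cases q' with
    | nil => exact ⟨rfl, heq_of_eq h, HEq.rfl⟩
    | cons q' e => simp [CStr.length] at hl
  | cons q e ih =>
    cases q' with
    | nil => simp [CStr.length] at hl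
    | cons q' e' =>
      simp only [CStr.length, Nat.add_right_cancel_iff] at hl
      simp only [CStr.append] at h
      injection h with h3 h4 h5 h6
      subst h3
      obtain ⟨r1, r2, r3⟩ := ih q' hl (eq_of_heq h5)
      subst r1
      cases r3
      cases h6
      exact ⟨rfl, r2, HEq.rfl⟩

/-- Splitting a lift of a concatenation. -/
theorem split_lift {S : SmallCategory C} {U : SmallCategory D} (Fo : C → D)
    (Fh : ∀ {c d : C}, Hm S c d → Hm U (Fo c) (Fo d))
    {x y z : D} (p : CStr U x y) (q : CStr U y z) :
    ∀ {a b : C} (_ : Fo a = x) (_ : Fo b = z) (v : CStr S a b),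
      HEq (p.append q) (mapCStr Fo Fh v) →
      ∃ (c : C) (_ : Fo c = y) (v1 : CStr S a c) (v2 : CStr S c b),
        v = v1.append v2 ∧ HEq p (mapCStr Fo Fh v1) ∧ HEq q (mapCStr Fo Fh v2) := by
  induction q with
  | nil =>
    intro a b ha hb v h
    subst hb
    exact ⟨b, rfl, v, .nil b, rfl, h, by simp only [mapCStr]; rfl⟩
  | cons q e ih =>
    intro a b ha hb v h
    have hl := length_heq ha.symm hb.symm _ _ h
    cases v with
    | nil => simp [mapCStr, CStr.append, CStr.length] at hl
    | cons v f =>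
      subst ha hb
      simp only [mapCStr, CStr.append] at h
      have h := eq_of_heq h
      injection h with h3 h4 h5 h6
      subst h3
      obtain ⟨c, hc, v1, v2, r1, r2, r3⟩ := ih rfl rfl v h5
      subst hc
      cases r3
      cases h6
      exact ⟨c, rfl, v1, v2.cons f, by rw [r1]; rfl, r2, by simp only [mapCStr]; rfl⟩

/-- The pull-back property of a functor `(Fo, Gh)` over strings of `(Fo, Fh)`. -/
structure PB {S' S : SmallCategory C} {U' U : SmallCategory D} (Fo : C → D)
    (Gh : ∀ {c d : C}, Hm S' c d → Hm U' (Fo c) (Fo d))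
    (Fh : ∀ {c d : C}, Hm S c d → Hm U (Fo c) (Fo d))
    (aS : ∀ {a b : C}, Hm S' a b → CStr S a b)
    (aU : ∀ {a b : D}, Hm U' a b → CStr U a b) : Prop where
  func : IsFuncM Fo Gh
  nonid : ∀ {c d : C} (u : Hm S' c d), ¬ IsIdLike S' u → ¬ IsIdLike U' (Gh u)
  comm : ∀ {c d : C} (f : Hm S' c d), aU (Gh f) = mapCStr Fo Fh (aS f)
  uniq : ∀ {c d : C} (f f' : Hm S' c d), Gh f = Gh f' → aS f = aS f' → f = f'
  lift : ∀ {c d : C} (u : Hm U' (Fo c) (Fo d)) (v : CStr S c d), aU u = mapCStr Fo Fh v →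
    ∃ f : Hm S' c d, Gh f = u ∧ aS f = v

theorem mapCStr_append {S : SmallCategory C} {U : SmallCategory D} (Fo : C → D)
    (Fh : ∀ {c d : C}, Hm S c d → Hm U (Fo c) (Fo d))
    {a b c : C} (p : CStr S a b) (q : CStr S b c) :
    mapCStr Fo Fh (p.append q) = (mapCStr Fo Fh p).append (mapCStr Fo Fh q) := by
  induction q with
  | nil => simp only [CStr.append, mapCStr]
  | cons q e ih => simp only [CStr.append, mapCStr, ih]

section Step

variable {S' S : SmallCategory C} {U' U : SmallCategory D} {Fo : C → D}
    {Gh : ∀ {c d : C}, Hm S' c d → Hm U' (Fo c) (Fo d)}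
    {Fh : ∀ {c d : C}, Hm S c d → Hm U (Fo c) (Fo d)}
    {aS : ∀ {a b : C}, Hm S' a b → CStr S a b}
    {aU : ∀ {a b : D}, Hm U' a b → CStr U a b}

theorem PB.cat_comm (h : PB Fo Gh Fh aS aU) {a b : C} (z : CStr S' a b) :
    catCS aU (mapCStr Fo Gh z) = mapCStr Fo Fh (catCS aS z) := by
  induction z with
  | nil => simp only [mapCStr, catCS]
  | cons z e ih => simp only [mapCStr, catCS, mapCStr_append, ih, h.comm]

theorem PB.cat_uniq (h : PB Fo Gh Fh aS aU) {a b : C} (z z' : CStr S' a b)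
    (h1 : mapCStr Fo Gh z = mapCStr Fo Gh z') (h2 : catCS aS z = catCS aS z') : z = z' := by
  induction z with
  | nil =>
    have hl := congrArg CStr.length h1
    cases z' with
    | nil => rfl
    | cons z' e => simp [mapCStr, CStr.length] at hl
  | cons z e ih =>
    have hl := congrArg CStr.length h1
    cases z' with
    | nil => simp [mapCStr, CStr.length] at hl
    | cons z' e' =>
      simp only [mapCStr] at h1
      simp only [catCS] at h2
      injection h1 with g3 _ g5 g6
      have key : ∀ {x x' y : D} (_ : x = x') (g : Hm U' x y) (g' : Hm U' x' y), HEq g g' →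
          (aU g).length = (aU g').length := by
        intro x x' y hx g g' hg
        subst hx; rw [eq_of_heq hg]
      have hk := key g3 _ _ g6
      rw [h.comm, h.comm, length_mapCStr, length_mapCStr] at hk
      obtain ⟨r1, r2, r3⟩ := append_cancel _ _ _ _ hk h2
      subst r1
      rw [ih z' (eq_of_heq g5) (eq_of_heq r2), h.uniq e e' (eq_of_heq g6) (eq_of_heq r3)]

theorem PB.cat_lift (h : PB Fo Gh Fh aS aU) {x y : D} (u : CStr U' x y) :
    ∀ {a b : C} (_ : Fo a = x) (_ : Fo b = y) (v : CStr S a b),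
      HEq (catCS aU u) (mapCStr Fo Fh v) →
      ∃ z : CStr S' a b, HEq (mapCStr Fo Gh z) u ∧ catCS aS z = v := by
  induction u with
  | nil =>
    intro a b ha hb v hv
    have hl := length_heq ha.symm hb.symm _ _ hv
    cases v with
    | nil => subst ha; exact ⟨.nil a, by simp only [mapCStr]; rfl, by simp only [catCS]⟩
    | cons v e => simp [mapCStr, catCS, CStr.length] at hl
  | cons u e ih =>
    intro a b ha hb v hv
    simp only [catCS] at hv
    obtain ⟨c, hc, v1, v2, r1, r2, r3⟩ := split_lift Fo Fh _ _ ha hb v hv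
    obtain ⟨z, hz1, hz2⟩ := ih ha hc v1 r2
    subst ha hb hc
    obtain ⟨f, hf1, hf2⟩ := h.lift e v2 (eq_of_heq r3)
    refine ⟨z.cons f, ?_, ?_⟩
    · simp only [mapCStr]; rw [eq_of_heq hz1, hf1]
    · simp only [catCS]; rw [hz2, hf2, r1]

theorem edgeIm_eq {c d : C} (e : Edge S' c d) (h : ¬ IsIdLike U' (Gh e.1)) :
    edgeIm Fo Gh e = (PathE.nil (Fo c)).cons ⟨Gh e.1, h⟩ := by
  unfold edgeIm Fop
  rw [dif_neg h]

theorem PB.flat_pmap (h : PB Fo Gh Fh aS aU) {a b : C} (p : PathE S' a b) :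
    flattenPath (pmapPath Fo Gh p) = mapCStr Fo Gh (flattenPath p) := by
  induction p with
  | nil => simp only [pmapPath_nil, flattenPath, mapCStr]
  | cons p e ih =>
    rw [pmapPath_cons, edgeIm_eq e (h.nonid e.1 e.2)]
    refine (congrArg flattenPath (PathE.comp_cons _ _ _)).trans ?_
    rw [PathE.comp_nil]
    refine (flattenPath_cons _ _).trans ?_
    rw [ih]
    simp only [flattenPath, mapCStr]

theorem idLike_map (hG : IsFuncM Fo Gh) {c d : C} (f : Hm S' c d) (hf : IsIdLike S' f) :
    IsIdLike U' (Gh f) := by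
  obtain ⟨h, rfl⟩ := hf
  exact ⟨congrArg Fo h, funcM_eqToHom hG h⟩

theorem PB.exists_path (h : PB Fo Gh Fh aS aU) {a b : C} (z : CStr S' a b) :
    ∀ {x y : D} (_ : Fo a = x) (_ : Fo b = y) (u : PathE U' x y),
      HEq (mapCStr Fo Gh z) (flattenPath u) → ∃ p : PathE S' a b, flattenPath p = z := by
  induction z with
  | nil => intros; exact ⟨.nil _, by simp only [flattenPath]⟩
  | cons z e ih =>
    intro x y hx hy u hu
    have hl := length_heq hx hy _ _ hu
    cases u with
    | nil => simp [mapCStr, flattenPath, CStr.length] at hl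
    | cons u g =>
      subst hx hy
      simp only [mapCStr, flattenPath] at hu
      have hu := eq_of_heq hu
      injection hu with g3 _ g5 g6
      subst g3
      obtain ⟨p, hp⟩ := ih rfl rfl u g5
      refine ⟨p.cons ⟨e, fun he => g.2 ?_⟩, (flattenPath_cons _ _).trans (by rw [hp])⟩
      rw [← eq_of_heq g6]
      exact idLike_map h.func e he

theorem PB.step (h : PB Fo Gh Fh aS aU) :
    PB (S' := freeCatStr S') (U' := freeCatStr U') Fo
      (fun {_ _} p => pmapPath Fo Gh p) Fh
      (fun {_ _} p => flattenPE aS p) (fun {_ _} p => flattenPE aU p) where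
  func := pmapPath_isFuncM
  nonid := by
    intro c d u hu
    change PathE S' c d at u
    cases u with
    | nil => exact absurd ⟨rfl, rfl⟩ hu
    | cons p e =>
      simp only [pmapPath_cons]
      rw [edgeIm_eq e (h.nonid e.1 e.2)]
      exact cons_not_idLike _ _
  comm := by
    intro c d f
    change PathE S' c d at f
    show flattenPE aU (pmapPath Fo Gh f) = mapCStr Fo Fh (flattenPE aS f)
    rw [flattenPE_eq, flattenPE_eq, h.flat_pmap, h.cat_comm]
  uniq := by
    intro c d f f' h1 h2
    change PathE S' c d at f f'
    change pmapPath Fo Gh f = pmapPath Fo Gh f' at h1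
    change flattenPE aS f = flattenPE aS f' at h2
    rw [flattenPE_eq, flattenPE_eq] at h2
    have h3 := congrArg flattenPath h1
    rw [h.flat_pmap, h.flat_pmap] at h3
    exact flattenPath_inj f f' (h.cat_uniq _ _ h3 h2)
  lift := by
    intro c d u v huv
    change PathE U' (Fo c) (Fo d) at u
    change flattenPE aU u = mapCStr Fo Fh v at huv
    rw [flattenPE_eq] at huv
    obtain ⟨z, hz1, hz2⟩ := h.cat_lift (flattenPath u) rfl rfl v (heq_of_eq huv)
    obtain ⟨p, rfl⟩ := h.exists_path z rfl rfl u hz1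
    refine ⟨p, ?_, ?_⟩
    · apply flattenPath_inj
      rw [h.flat_pmap]
      exact eq_of_heq hz1
    · show flattenPE aS p = v
      rw [flattenPE_eq, hz2]

theorem PB.congr (h : PB Fo Gh Fh aS aU)
    {Gh' : ∀ {c d : C}, Hm S' c d → Hm U' (Fo c) (Fo d)}
    {aS' : ∀ {a b : C}, Hm S' a b → CStr S a b}
    {aU' : ∀ {a b : D}, Hm U' a b → CStr U a b}
    (h0 : ∀ {c d : C} (f : Hm S' c d), Gh f = Gh' f)
    (h1 : ∀ {c d : C} (f : Hm S' c d), aS f = aS' f)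
    (h2 : ∀ {c d : D} (f : Hm U' c d), aU f = aU' f) : PB Fo Gh' Fh aS' aU' := by
  obtain rfl : @Gh = @Gh' := by funext c d f; exact h0 f
  obtain rfl : @aS = @aS' := by funext c d f; exact h1 f
  obtain rfl : @aU = @aU' := by funext c d f; exact h2 f
  exact h

end Step

theorem PB.base {S : SmallCategory C} {U : SmallCategory D} {Fo : C → D}
    {Fh : ∀ {c d : C}, Hm S c d → Hm U (Fo c) (Fo d)} (hF : IsFuncM Fo Fh)
    (hni : ∀ {c d : C} (u : Hm S c d), ¬ IsIdLike S u → ¬ IsIdLike U (Fh u)) :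
    PB Fo Fh Fh (fun {_ _} f => single S f) (fun {_ _} f => single U f) where
  func := hF
  nonid := hni
  comm := fun f => by simp only [single, mapCStr]
  uniq := by
    intro c d f f' _ h
    simp only [single] at h
    injection h
  lift := by
    intro c d u v h
    simp only [single] at h
    have hl := congrArg CStr.length h
    cases v with
    | nil => simp [mapCStr, CStr.length] at hl
    | cons v e =>
      cases v with
      | cons v e' => simp [mapCStr, CStr.length] at hl
      | nil =>
        simp only [mapCStr] at h
        injection h with _ _ _ g6
        exact ⟨e, g6.symm, rfl⟩

theorem PB.dk {S : SmallCategory C} {U : SmallCategory D} {Fo : C → D}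
    {Fh : ∀ {c d : C}, Hm S c d → Hm U (Fo c) (Fo d)} (hF : IsFuncM Fo Fh)
    (hni : ∀ {c d : C} (u : Hm S c d), ¬ IsIdLike S u → ¬ IsIdLike U (Fh u)) (n : ℕ) :
    PB (S' := dkStr S n) (U' := dkStr U n) Fo (fun {_ _} u => dkMapH Fo Fh n u) Fh
      (fun {_ _} f => flattenDK S n f) (fun {_ _} f => flattenDK U n f) := by
  induction n with
  | zero =>
    have h := (PB.base hF hni).step
    have e1 : ∀ {a b : C} (p : PathE S a b),
        flattenPE (fun {_ _} f => single S f) p = flattenDK S 0 p := by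
      intro a b p; rw [← flattenPath_eq, flattenDK_zero]
    have e2 : ∀ {a b : D} (p : PathE U a b),
        flattenPE (fun {_ _} f => single U f) p = flattenDK U 0 p := by
      intro a b p; rw [← flattenPath_eq, flattenDK_zero]
    exact h.congr (fun f => by rw [dkMapH]) e1 e2
  | succ n ih =>
    exact ih.step.congr (fun f => by rw [dkMapH]) (fun f => (flattenDK_succ _ _ _).symm)
      (fun f => (flattenDK_succ _ _ _).symm)

end Pullback

end HC

/-- STATEMENT 16: for a functor `f : C → D` sending non-identity morphisms to non-identity
morphisms and all `m, n`, the square formed by `N_m(F_n f)`, the maps `α` deleting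
parentheses, and `⨿_k N_k(f)` is a pull-back square of sets. -/
theorem nerve_of_dk_resolution_pullback_along_forgetting_parentheses
    (C D : Type) (S : SmallCategory C) (U : SmallCategory D)
    (Fo : C → D) (Fh : ∀ {c d : C}, Hm S c d → Hm U (Fo c) (Fo d))
    (hF : IsFuncM Fo Fh)
    (hni : ∀ {c d : C} (u : Hm S c d), ¬ IsIdLike S u → ¬ IsIdLike U (Fh u))
    (m n : ℕ) :
    -- the square commutes…
    (∀ z : NerveLevel (dkStr S n) m,
      mapTotalNerve Fo (fun {_ _} u => Fh u) (alphaNerve S n m z) =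
        alphaNerve U n m
          (mapNerveLevel Fo (fun {_ _} u => dkMapH Fo Fh n u) m z)) ∧
    -- …and is a pull-back of sets
    (∀ (u : NerveLevel (dkStr U n) m) (v : TotalNerve S),
      alphaNerve U n m u = mapTotalNerve Fo (fun {_ _} g => Fh g) v →
      ∃! z : NerveLevel (dkStr S n) m,
        mapNerveLevel Fo (fun {_ _} g => dkMapH Fo Fh n g) m z = u ∧
        alphaNerve S n m z = v) := by
  have h := PB.dk hF hni n
  constructor
  · rintro ⟨⟨⟨a, b⟩, z⟩, hz⟩
    simp only [mapTotalNerve, alphaNerve, mapNerveLevel, alphaStr_eq]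
    rw [← h.cat_comm]
  · rintro ⟨⟨⟨x, y⟩, u⟩, hu⟩ ⟨⟨a, b⟩, v⟩ huv
    change CStr (dkStr U n) x y at u
    change CStr S a b at v
    simp only [mapTotalNerve, alphaNerve, alphaStr_eq] at huv
    injection huv with e1 e2
    injection e1 with e3 e4
    subst e3 e4
    obtain ⟨z, hz1, hz2⟩ := h.cat_lift u rfl rfl v e2
    have hz1 := eq_of_heq hz1
    have hlen : z.length = m := by
      rw [← length_mapCStr Fo (fun {_ _} u => dkMapH Fo Fh n u) z, hz1]
      exact hu
    refine ⟨⟨⟨(a, b), z⟩, hlen⟩, ⟨?_, ?_⟩, ?_⟩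
    · apply Subtype.ext
      simp only [mapNerveLevel, mapTotalNerve, hz1]; rfl
    · simp only [alphaNerve, alphaStr_eq, hz2]; rfl
    · rintro ⟨⟨⟨a', b'⟩, z'⟩, hz'⟩ ⟨h1, h2⟩
      simp only [alphaNerve, alphaStr_eq] at h2
      injection h2 with e1 e2
      injection e1 with e3 e4
      subst e3 e4
      have h1 := congrArg Subtype.val h1
      simp only [mapNerveLevel, mapTotalNerve] at h1
      injection h1 with _ h3
      have : z' = z := h.cat_uniq _ _ (h3.trans hz1.symm) ((eq_of_heq e2).trans hz2.symm)
      subst this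
      rfl
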